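/- Let K ⊂ ℝ^d be compact, δ : ℝ^d → [0,∞) a distance-like function, R > 0, and 0 ≤ ε ≤ R with sup_{ℝ^d}|δ − d_K| ≤ ε. Then for any bounded Lipschitz χ : ℝ^d → [0,∞), ‖V_{δ,R}(χ) − ∫_{K^{R−ε}} n_δ(x) ⊗ n_δ(x) χ(x − n_δ(x)) dx‖_op ≤ R² ‖χ‖_BL H^d(K^{R+ε} ∖ K^{R−ε}). -/

import Mathlib

open MeasureTheory Metric Filter
open scoped NNReal ENNReal

noncomputable section

abbrev Euc (d : ℕ) := EuclideanSpace ℝ (Fin d)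

/-- A function `δ : ℝ^d → [0,∞)` is distance-like if it is nonnegative, proper
and `δ²` is 1-semiconcave, i.e. `x ↦ ‖x‖² - δ x ^ 2` is convex. -/
def DistanceLike {d : ℕ} (δ : Euc d → ℝ) : Prop :=
  (∀ x, 0 ≤ δ x) ∧
  Tendsto δ (comap (fun x : Euc d => ‖x‖) atTop) atTop ∧
  ConvexOn ℝ Set.univ (fun x : Euc d => ‖x‖ ^ 2 - δ x ^ 2)

/-- `n_δ(x) := (1/2) ∇(δ²)(x)` (junk value where `δ²` is not differentiable). -/
def nvec {d : ℕ} (δ : Euc d → ℝ) (x : Euc d) : Euc d :=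
  (1 / 2 : ℝ) • gradient (fun y => δ y ^ 2) x

/-- The tensor product `v ⊗ w`, as the linear map `u ↦ ⟪w, u⟫ • v`. -/
def tensor {d : ℕ} (v w : Euc d) : Euc d →L[ℝ] Euc d :=
  (ContinuousLinearMap.toSpanSingleton ℝ v).comp (innerSL ℝ w)

/-- The δ-Voronoi covariance measure `V_{δ,R}(χ)`. -/
def VCM {d : ℕ} (δ : Euc d → ℝ) (R : ℝ) (χ : Euc d → ℝ) : Euc d →L[ℝ] Euc d :=
  ∫ x in {y : Euc d | δ y ≤ R}, χ (x - nvec δ x) • tensor (nvec δ x) (nvec δ x)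

/-! Convexity of `‖·‖² - δ²` bounds `δ²` from above by the quadratic
`δ(x)² + 2⟪n_δ(x), y - x⟫ + ‖y - x‖²`. At its minimum `y = x - n_δ(x)` this quadratic equals
`δ(x)² - ‖n_δ(x)‖²`, which is nonnegative because `δ²` is; hence `‖n_δ(x)‖ ≤ δ(x)`, and on `δ^R`
the integrand of `V_{δ,R}(χ)` has norm at most `R² sup|χ|`. Since `|δ - d_K| ≤ ε`, the two
domains of integration differ by a subset of `K^{R+ε} \ K^{R-ε}`. -/

theorem add_fderiv_sub_le_of_convexOn {E : Type*} [NormedAddCommGroup E] [NormedSpace ℝ E]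
    {s : Set E} {f : E → ℝ} {f' : E →L[ℝ] ℝ} {x y : E} (hf : ConvexOn ℝ s f)
    (hx : x ∈ s) (hy : y ∈ s) (hf' : HasFDerivAt f f' x) : f x + f' (y - x) ≤ f y := by
  have hconv : ConvexOn ℝ (AffineMap.lineMap x y ⁻¹' s) (f ∘ AffineMap.lineMap (k := ℝ) x y) :=
    hf.comp_affineMap _
  have hderiv : HasDerivAt (f ∘ AffineMap.lineMap (k := ℝ) x y) (f' (y - x)) 0 :=
    HasFDerivAt.comp_hasDerivAt 0 (by simpa using hf') AffineMap.hasDerivAt_lineMap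
  have hslope := hconv.le_slope_of_hasDerivAt (by simpa using hx) (by simpa using hy)
    one_pos hderiv
  simp only [slope_def_field, Function.comp_apply, AffineMap.lineMap_apply_one,
    AffineMap.lineMap_apply_zero, sub_zero, div_one] at hslope
  linarith

theorem continuous_of_convexOn_norm_sq_sub {E : Type*} [NormedAddCommGroup E] [NormedSpace ℝ E]
    [FiniteDimensional ℝ E] {f : E → ℝ} (hf : ConvexOn ℝ Set.univ fun x => ‖x‖ ^ 2 - f x) :
    Continuous f := by
  have hconv : Continuous fun x => ‖x‖ ^ 2 - f x :=
    continuousOn_univ.1 (hf.continuousOn isOpen_univ)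
  have hsub : Continuous fun x => ‖x‖ ^ 2 - (‖x‖ ^ 2 - f x) := by fun_prop
  simpa only [sub_sub_cancel] using hsub

section Semiconcave

variable {E : Type*} [NormedAddCommGroup E] [InnerProductSpace ℝ E] [CompleteSpace E]
  {f : E → ℝ} {g x : E}

theorem le_add_inner_add_norm_sq_of_convexOn_norm_sq_sub
    (hf : ConvexOn ℝ Set.univ fun x => ‖x‖ ^ 2 - f x) (hg : HasGradientAt f g x) (y : E) :
    f y ≤ f x + inner ℝ g (y - x) + ‖y - x‖ ^ 2 := by
  have htangent := add_fderiv_sub_le_of_convexOn hf (Set.mem_univ x) (Set.mem_univ y)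
    ((hasStrictFDerivAt_norm_sq x).hasFDerivAt.sub hg.hasFDerivAt)
  have hexpand : ‖y‖ ^ 2 = ‖x‖ ^ 2 + 2 * inner ℝ x (y - x) + ‖y - x‖ ^ 2 := by
    rw [← norm_add_sq_real, add_sub_cancel]
  simp only [sub_apply, smul_apply, innerSL_apply_apply, InnerProductSpace.toDual_apply_apply,
    nsmul_eq_mul, Nat.cast_ofNat] at htangent
  linarith

theorem norm_sq_le_four_mul_of_convexOn_norm_sq_sub
    (hf : ConvexOn ℝ Set.univ fun x => ‖x‖ ^ 2 - f x) (hf_nonneg : ∀ x, 0 ≤ f x)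
    (hg : HasGradientAt f g x) : ‖g‖ ^ 2 ≤ 4 * f x := by
  have hmin := le_add_inner_add_norm_sq_of_convexOn_norm_sq_sub hf hg (x - (1 / 2 : ℝ) • g)
  have hnonneg := hf_nonneg (x - (1 / 2 : ℝ) • g)
  rw [sub_sub_cancel_left, inner_neg_right, norm_neg, inner_smul_right, norm_smul, mul_pow,
    real_inner_self_eq_norm_sq, Real.norm_of_nonneg (by norm_num)] at hmin
  linarith

end Semiconcave

theorem norm_setIntegral_sub_setIntegral_le {α F : Type*} [MeasurableSpace α] {μ : Measure α}
    [NormedAddCommGroup F] [NormedSpace ℝ F] {f : α → F} {s t : Set α} {M : ℝ}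
    (hf : IntegrableOn f s μ) (ht : MeasurableSet t) (hts : t ⊆ s) (hμ : μ (s \ t) ≠ ∞)
    (hM : ∀ x ∈ s \ t, ‖f x‖ ≤ M) :
    ‖(∫ x in s, f x ∂μ) - ∫ x in t, f x ∂μ‖ ≤ M * μ.real (s \ t) := by
  rw [← setIntegral_sdiff ht hf hts]
  exact norm_setIntegral_le_of_norm_le_const hμ.lt_top hM

section VoronoiCovariance

variable {d : ℕ} {δ : Euc d → ℝ}

namespace DistanceLike

theorem continuous (hδ : DistanceLike δ) : Continuous δ := by
  obtain ⟨hnonneg, -, hconv⟩ := hδ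
  simpa only [Real.sqrt_sq (hnonneg _)] using (continuous_of_convexOn_norm_sq_sub hconv).sqrt

theorem measure_setOf_le_ne_top (hδ : DistanceLike δ) (μ : Measure (Euc d))
    [IsFiniteMeasureOnCompacts μ] (r : ℝ) : μ {x | δ x ≤ r} ≠ ∞ := by
  have hproper : ∀ᶠ x in Bornology.cobounded (Euc d), r < δ x := by
    rw [← comap_norm_atTop]
    exact hδ.2.1.eventually_gt_atTop r
  have hbounded : Bornology.IsBounded {x | δ x ≤ r} := by
    simpa only [← Bornology.isCobounded_compl_iff, Bornology.isCobounded_def, Filter.Eventually,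
      Set.compl_ofPred, not_le] using hproper
  exact hbounded.measure_lt_top.ne

theorem norm_nvec_le (hδ : DistanceLike δ) (x : Euc d) : ‖nvec δ x‖ ≤ δ x := by
  obtain ⟨hnonneg, -, hconv⟩ := hδ
  by_cases hdiff : DifferentiableAt ℝ (fun y => δ y ^ 2) x
  · have hgrad := norm_sq_le_four_mul_of_convexOn_norm_sq_sub hconv (fun y => sq_nonneg (δ y))
      hdiff.hasGradientAt
    refine le_of_sq_le_sq ?_ (hnonneg x)
    rw [nvec, norm_smul, mul_pow, Real.norm_of_nonneg (by norm_num)]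
    linarith
  · simpa only [nvec, gradient_eq_zero_of_not_differentiableAt hdiff, smul_zero, norm_zero]
      using hnonneg x

end DistanceLike

theorem measurable_nvec (δ : Euc d → ℝ) : Measurable (nvec δ) :=
  ((InnerProductSpace.toDual ℝ (Euc d)).symm.continuous.measurable.comp
    (measurable_fderiv ℝ fun y => δ y ^ 2)).const_smul (1 / 2 : ℝ)

theorem tensor_eq_rankOne (v w : Euc d) : tensor v w = InnerProductSpace.rankOne ℝ v w := rfl

theorem norm_tensor (v w : Euc d) : ‖tensor v w‖ = ‖v‖ * ‖w‖ := by
  rw [tensor_eq_rankOne, InnerProductSpace.norm_rankOne]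

theorem continuous_tensor_self : Continuous fun v : Euc d => tensor v v := by
  simp only [tensor_eq_rankOne, InnerProductSpace.rankOne_def]
  fun_prop

/-- The integrand of `V_{δ,R}(χ)`: its density with respect to Lebesgue measure on `δ^R`. It does
not involve `R`, so that it can also be integrated over other domains, such as `K^{R-ε}`. -/
def vcmDensity (δ χ : Euc d → ℝ) (x : Euc d) : Euc d →L[ℝ] Euc d :=
  χ (x - nvec δ x) • tensor (nvec δ x) (nvec δ x)

theorem stronglyMeasurable_vcmDensity (δ : Euc d → ℝ) {χ : Euc d → ℝ} (hχ : Measurable χ) :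
    StronglyMeasurable (vcmDensity δ χ) := by
  have hn := measurable_nvec δ
  have hscalar : StronglyMeasurable fun x => χ (x - nvec δ x) :=
    (hχ.comp (measurable_id.sub hn)).stronglyMeasurable
  have htensor : StronglyMeasurable fun x => tensor (nvec δ x) (nvec δ x) :=
    continuous_tensor_self.comp_stronglyMeasurable hn.stronglyMeasurable
  exact hscalar.smul htensor

namespace DistanceLike

variable {χ : Euc d → ℝ} {M R : ℝ}

theorem norm_vcmDensity_le (hδ : DistanceLike δ) (hχM : ∀ x, |χ x| ≤ M) {x : Euc d}
    (hx : δ x ≤ R) : ‖vcmDensity δ χ x‖ ≤ R ^ 2 * M := by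
  have hn : ‖nvec δ x‖ ≤ R := (hδ.norm_nvec_le x).trans hx
  calc ‖vcmDensity δ χ x‖ = ‖nvec δ x‖ ^ 2 * |χ (x - nvec δ x)| := by
        rw [vcmDensity, norm_smul, norm_tensor, Real.norm_eq_abs, mul_comm, sq]
    _ ≤ R ^ 2 * M := by gcongr; exact hχM _

theorem integrableOn_vcmDensity (hδ : DistanceLike δ) (hχ : Measurable χ)
    (hχM : ∀ x, |χ x| ≤ M) (R : ℝ) : IntegrableOn (vcmDensity δ χ) {x | δ x ≤ R} :=
  Measure.integrableOn_of_bounded (hδ.measure_setOf_le_ne_top volume R)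
    (stronglyMeasurable_vcmDensity δ hχ).aestronglyMeasurable
    (ae_restrict_of_forall_mem (measurableSet_le hδ.continuous.measurable measurable_const)
      fun _ hx => hδ.norm_vcmDensity_le hχM hx)

end DistanceLike

theorem stmt11_general (hδ : DistanceLike δ) {ρ : Euc d → ℝ} (hρ : Measurable ρ) {R ε : ℝ}
    (hclose : ∀ x, |δ x - ρ x| ≤ ε) {χ : Euc d → ℝ} (hχ : Measurable χ) {M : ℝ}
    (hχM : ∀ x, |χ x| ≤ M) :
    ‖VCM δ R χ - ∫ x in {y | ρ y ≤ R - ε},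
        χ (x - nvec δ x) • tensor (nvec δ x) (nvec δ x)‖ ≤
      R ^ 2 * M * volume.real ({y | ρ y ≤ R + ε} \ {y | ρ y ≤ R - ε}) := by
  have hinner : {y | ρ y ≤ R - ε} ⊆ {y | δ y ≤ R} := fun y (hy : ρ y ≤ R - ε) =>
    show δ y ≤ R by linarith [(abs_le.1 (hclose y)).2]
  have houter : {y | δ y ≤ R} ⊆ {y | ρ y ≤ R + ε} := fun y (hy : δ y ≤ R) =>
    show ρ y ≤ R + ε by linarith [(abs_le.1 (hclose y)).1]
  have hfinite : volume {y | ρ y ≤ R + ε} ≠ ∞ :=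
    measure_ne_top_of_subset (fun y (hy : ρ y ≤ R + ε) =>
      show δ y ≤ R + ε + ε by linarith [(abs_le.1 (hclose y)).2])
      (hδ.measure_setOf_le_ne_top volume (R + ε + ε))
  have hM : 0 ≤ M := (abs_nonneg _).trans (hχM 0)
  calc ‖VCM δ R χ - ∫ x in {y | ρ y ≤ R - ε}, vcmDensity δ χ x‖
      ≤ R ^ 2 * M * volume.real ({y | δ y ≤ R} \ {y | ρ y ≤ R - ε}) :=
        norm_setIntegral_sub_setIntegral_le (hδ.integrableOn_vcmDensity hχ hχM R)
          (measurableSet_le hρ measurable_const) hinner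
          (measure_ne_top_of_subset Set.sdiff_subset (hδ.measure_setOf_le_ne_top volume R))
          fun _ hx => hδ.norm_vcmDensity_le hχM hx.1
    _ ≤ R ^ 2 * M * volume.real ({y | ρ y ≤ R + ε} \ {y | ρ y ≤ R - ε}) := by
        gcongr
        exact measure_ne_top_of_subset Set.sdiff_subset hfinite

end VoronoiCovariance

/-- Truncating the domain of integration of `V_{δ,R}(χ)` from `δ^R` to `K^{R-ε}` changes
it by at most `R² ‖χ‖_BL H^d(K^{R+ε} \ K^{R-ε})` when `sup |δ - d_K| ≤ ε ≤ R`; the BL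
norm `sup|χ| + Lip(χ)` is represented by `Cb + L`. -/
theorem stmt11 {d : ℕ} (K : Set (Euc d)) (hK : IsCompact K) (hKne : K.Nonempty)
    (δ : Euc d → ℝ) (hδ : DistanceLike δ)
    (R ε : ℝ) (hR : 0 < R) (hε0 : 0 ≤ ε) (hεR : ε ≤ R)
    (hclose : ∀ x, |δ x - infDist x K| ≤ ε)
    (χ : Euc d → ℝ) (hχ0 : ∀ x, 0 ≤ χ x) (Cb : ℝ) (L : ℝ≥0)
    (hCb : ∀ x, |χ x| ≤ Cb) (hL : LipschitzWith L χ) :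
    ‖VCM δ R χ -
        ∫ x in {y : Euc d | infDist y K ≤ R - ε},
          χ (x - nvec δ x) • tensor (nvec δ x) (nvec δ x)‖ ≤
      R ^ 2 * (Cb + (L : ℝ)) *
        (volume ({y : Euc d | infDist y K ≤ R + ε} \
          {y : Euc d | infDist y K ≤ R - ε})).toReal :=
  stmt11_general hδ (continuous_infDist_pt K).measurable hclose hL.continuous.measurable
    fun x => (hCb x).trans (le_add_of_nonneg_right L.coe_nonneg)
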